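/- There exists an irrational x ∈ (0,1) that is normal for the continued fraction transformation: for every m ≥ 1 and every finite word d_1 d_2 … d_m of positive integers, the frequency lim_{N→∞} (1/N)·#{0 ≤ n < N : a_{n+1}(x) = d_1, …, a_{n+m}(x) = d_m} exists and equals the Gauss measure of the cylinder set {y ∈ (0,1) irrational : a_1(y) = d_1, …, a_m(y) = d_m} (Adler–Keane–Smorodinsky). -/

import Mathlib

open Filter MeasureTheory Topology
open scoped Classical

/-- The Gauss map `T x = 1/x mod 1`. -/
noncomputable def gaussMap (x : ℝ) : ℝ := Int.fract x⁻¹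

/-- `cfa n x` is the partial quotient `a_{n+1}(x)` of the regular continued fraction expansion
of `x`, generated by the Gauss map: `a_1(x) = ⌊1/x⌋` and `a_{k+1}(x) = a_k (T x)`. -/
noncomputable def cfa : ℕ → ℝ → ℕ
  | 0, x => ⌊x⁻¹⌋₊
  | n + 1, x => cfa n (gaussMap x)

/-- The Gauss measure `μ(A) = (1/log 2) ∫_A dx/(1+x)` on `(0,1)`. -/
noncomputable def gaussMeasure : Measure ℝ :=
  (volume.restrict (Set.Ioo (0 : ℝ) 1)).withDensity
    fun x => ENNReal.ofReal ((Real.log 2)⁻¹ * (1 + x)⁻¹)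

/-!
Only the invariance of the Gauss measure `μ` under the Gauss map is needed, not its ergodicity.
For a `μ`-random point, the number of occurrences of a word among its first `L` partial quotients
has mean `L` times the measure of the cylinder. Choose points `x₀, x₁, …` one after the other so
that, for every word, the deviations from this mean over the first `2i + 1` partial quotients of
`xᵢ` add up to `O(k^{3/2})` over `i < k`: in a weighted sum over all words of the squared total
deviations, the cross terms with the new point have mean zero, so some point makes the sum grow by
at most a constant times `(2k + 1)²`. Concatenating these prefixes gives a sequence in which, up to
position `k²`, every word occurs with the right frequency up to an error `O(k^{-1/2})`. As every
sequence of positive integers is the sequence of partial quotients of an irrational, this proves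
the theorem.
-/

section Selection

open scoped ENNReal

lemma exists_seq_sum_le_of_forall_exists_le {Ω V R : Type*} [AddCommMonoid V] [AddCommMonoid R]
    [PartialOrder R] [IsOrderedAddMonoid R] {P : Ω → Prop} (X : ℕ → Ω → V) (Φ : V → R)
    (c : ℕ → R) (h : ∀ k v, ∃ x, P x ∧ Φ (v + X k x) ≤ Φ v + c k) :
    ∃ ω : ℕ → Ω, (∀ k, P (ω k)) ∧
      ∀ k, Φ (∑ i ∈ Finset.range k, X i (ω i)) ≤ Φ 0 + ∑ i ∈ Finset.range k, c i := by
  choose g hgP hg using h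
  let S : ℕ → V := fun k => k.rec 0 fun i v => v + X i (g i v)
  have hS (k : ℕ) : S k = ∑ i ∈ Finset.range k, X i (g i (S i)) := by
    induction k with
    | zero => rfl
    | succ k ih => rw [Finset.sum_range_succ, ← ih]
  refine ⟨fun k => g k (S k), fun k => hgP _ _, fun k => ?_⟩
  rw [← hS]
  induction k with
  | zero => simp [S]
  | succ k ih =>
    calc Φ (S (k + 1)) ≤ Φ (S k) + c k := hg _ _
      _ ≤ Φ 0 + ∑ i ∈ Finset.range (k + 1), c i := by
        rw [Finset.sum_range_succ, ← add_assoc]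
        gcongr

variable {Ω ι : Type*} [MeasurableSpace Ω] {μ : Measure Ω} [IsProbabilityMeasure μ]

/-- The cross term `2 c X` has mean zero. -/
lemma lintegral_ofReal_add_sq_le {X : Ω → ℝ} {L : ℝ} (hX : AEMeasurable X μ)
    (hL : ∀ᵐ x ∂μ, |X x| ≤ L) (hX0 : ∫ x, X x ∂μ = 0) (c : ℝ) :
    ∫⁻ x, ENNReal.ofReal ((c + X x) ^ 2) ∂μ ≤ ENNReal.ofReal (c ^ 2 + L ^ 2) := by
  have hbound : ∀ᵐ x ∂μ, (c + X x) ^ 2 ≤ c ^ 2 + L ^ 2 + 2 * c * X x := by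
    filter_upwards [hL] with x hx
    nlinarith [sq_le_sq' (abs_le.1 hx).1 (abs_le.1 hx).2]
  have hXint : Integrable X μ := .of_bound hX.aestronglyMeasurable L hL
  have hint : Integrable (fun x => c ^ 2 + L ^ 2 + 2 * c * X x) μ :=
    (integrable_const _).add (hXint.const_mul _)
  calc ∫⁻ x, ENNReal.ofReal ((c + X x) ^ 2) ∂μ
      ≤ ∫⁻ x, ENNReal.ofReal (c ^ 2 + L ^ 2 + 2 * c * X x) ∂μ :=
        lintegral_mono_ae (hbound.mono fun x hx => ENNReal.ofReal_le_ofReal hx)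
    _ = ENNReal.ofReal (∫ x, (c ^ 2 + L ^ 2 + 2 * c * X x) ∂μ) :=
        (ofReal_integral_eq_lintegral_ofReal hint
          (hbound.mono fun x hx => (sq_nonneg _).trans hx)).symm
    _ = ENNReal.ofReal (c ^ 2 + L ^ 2) := by
        rw [integral_add (integrable_const _) (hXint.const_mul _), integral_const_mul, hX0]
        simp

lemma exists_tsum_mul_add_sq_le [Countable ι] {P : Ω → Prop} (hP : ∀ᵐ x ∂μ, P x)
    {X : ι → Ω → ℝ} {L : ℝ} (hX : ∀ e, AEMeasurable (X e) μ) (hL : ∀ e, ∀ᵐ x ∂μ, |X e x| ≤ L)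
    (hX0 : ∀ e, ∫ x, X e x ∂μ = 0) (w : ι → ℝ≥0∞) (v : ι → ℝ) :
    ∃ x, P x ∧ ∑' e, w e * ENNReal.ofReal ((v e + X e x) ^ 2) ≤
      ∑' e, w e * ENNReal.ofReal (v e ^ 2) + (∑' e, w e) * ENNReal.ofReal (L ^ 2) := by
  have hmeas (e : ι) : AEMeasurable (fun x => ENNReal.ofReal ((v e + X e x) ^ 2)) μ :=
    (((hX e).const_add _).pow_const 2).ennreal_ofReal
  have hmeas_tsum :
      AEMeasurable (fun x => ∑' e, w e * ENNReal.ofReal ((v e + X e x) ^ 2)) μ :=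
    .tsum fun e => (hmeas e).const_mul (w e)
  obtain ⟨x, hx, hle⟩ := exists_notMem_null_le_lintegral hmeas_tsum (ae_iff.1 hP)
  refine ⟨x, not_not.1 hx, hle.trans ?_⟩
  calc ∫⁻ x, ∑' e, w e * ENNReal.ofReal ((v e + X e x) ^ 2) ∂μ
      = ∑' e, w e * ∫⁻ x, ENNReal.ofReal ((v e + X e x) ^ 2) ∂μ := by
        rw [lintegral_tsum fun e => (hmeas e).const_mul (w e)]
        simp only [lintegral_const_mul'' _ (hmeas _)]
    _ ≤ ∑' e, w e * ENNReal.ofReal (v e ^ 2 + L ^ 2) :=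
        ENNReal.tsum_le_tsum fun e =>
          mul_le_mul_right (lintegral_ofReal_add_sq_le (hX e) (hL e) (hX0 e) (v e)) _
    _ = ∑' e, w e * ENNReal.ofReal (v e ^ 2) + (∑' e, w e) * ENNReal.ofReal (L ^ 2) := by
        simp only [ENNReal.ofReal_add (sq_nonneg _) (sq_nonneg _), mul_add, ENNReal.tsum_add,
          ENNReal.tsum_mul_right]

/-- Greedy choice: with summable positive weights on `ι`, each new point is taken so as to keep
the weighted sum of squares below its mean. -/
lemma exists_seq_sum_sq_le [Countable ι] {P : Ω → Prop} (hP : ∀ᵐ x ∂μ, P x)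
    {X : ℕ → ι → Ω → ℝ} {L : ℕ → ℝ} (hX : ∀ k e, AEMeasurable (X k e) μ)
    (hL : ∀ k e, ∀ᵐ x ∂μ, |X k e x| ≤ L k) (hX0 : ∀ k e, ∫ x, X k e x ∂μ = 0) :
    ∃ ω : ℕ → Ω, (∀ k, P (ω k)) ∧ ∀ e, ∃ C : ℝ, ∀ k,
      (∑ i ∈ Finset.range k, X i e (ω i)) ^ 2 ≤ C * ∑ i ∈ Finset.range k, L i ^ 2 := by
  obtain ⟨w, hw_pos, hw_sum⟩ := ENNReal.exists_pos_sum_of_countable one_ne_zero ι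
  obtain ⟨ω, hωP, hω⟩ := exists_seq_sum_le_of_forall_exists_le (fun k x e => X k e x)
    (fun v : ι → ℝ => ∑' e, (w e : ℝ≥0∞) * ENNReal.ofReal (v e ^ 2))
    (fun k => (∑' e, (w e : ℝ≥0∞)) * ENNReal.ofReal (L k ^ 2))
    (fun k v => exists_tsum_mul_add_sq_le hP (hX k) (hL k) (hX0 k) _ v)
  refine ⟨ω, hωP, fun e => ⟨(w e : ℝ)⁻¹, fun k => ?_⟩⟩
  have hsum : 0 ≤ ∑ i ∈ Finset.range k, L i ^ 2 := Finset.sum_nonneg fun i _ => sq_nonneg _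
  have hle : ENNReal.ofReal (w e * (∑ i ∈ Finset.range k, X i e (ω i)) ^ 2) ≤
      ENNReal.ofReal (∑ i ∈ Finset.range k, L i ^ 2) :=
    calc ENNReal.ofReal (w e * (∑ i ∈ Finset.range k, X i e (ω i)) ^ 2)
        = w e * ENNReal.ofReal ((∑ i ∈ Finset.range k, X i e (ω i)) ^ 2) := by
          rw [ENNReal.ofReal_mul (w e).coe_nonneg, ENNReal.ofReal_coe_nnreal]
      _ ≤ ∑' e, w e * ENNReal.ofReal ((∑ i ∈ Finset.range k, X i e (ω i)) ^ 2) :=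
          ENNReal.le_tsum e
      _ ≤ (∑' e, (w e : ℝ≥0∞)) * ∑ i ∈ Finset.range k, ENNReal.ofReal (L i ^ 2) := by
          simpa [Finset.sum_apply, Finset.mul_sum] using hω k
      _ ≤ ∑ i ∈ Finset.range k, ENNReal.ofReal (L i ^ 2) := mul_le_of_le_one_left' hw_sum.le
      _ = ENNReal.ofReal (∑ i ∈ Finset.range k, L i ^ 2) :=
          (ENNReal.ofReal_sum_of_nonneg fun i _ => sq_nonneg _).symm
  rw [ENNReal.ofReal_le_ofReal_iff hsum] at hle
  exact (le_inv_mul_iff₀ (NNReal.coe_pos.2 (hw_pos e))).2 hle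

end Selection

section Visits

lemma cast_count_iterate_mem {Ω : Type*} (T : Ω → Ω) (s : Set Ω) (L : ℕ) (x : Ω) :
    (Nat.count (fun n => T^[n] x ∈ s) L : ℝ) =
      ∑ n ∈ Finset.range L, (T^[n] ⁻¹' s).indicator 1 x := by
  simp [Nat.count_eq_card_filter_range, Set.indicator_apply]

variable {Ω : Type*} [MeasurableSpace Ω] {μ : Measure Ω} {T : Ω → Ω}

lemma measurable_count_iterate_mem {s : Set Ω} (hT : Measurable T)
    (hs : MeasurableSet s) (L : ℕ) :
    Measurable fun x => (Nat.count (fun n => T^[n] x ∈ s) L : ℝ) := by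
  simp only [cast_count_iterate_mem]
  exact Finset.measurable_sum _ fun n _ => measurable_one.indicator (hT.iterate n hs)

lemma integral_count_iterate_mem [IsFiniteMeasure μ] {s : Set Ω}
    (hT : MeasurePreserving T μ μ) (hs : MeasurableSet s) (L : ℕ) :
    ∫ x, (Nat.count (fun n => T^[n] x ∈ s) L : ℝ) ∂μ = L * μ.real s := by
  have hpre (n : ℕ) : MeasurableSet (T^[n] ⁻¹' s) := hT.measurable.iterate n hs
  simp only [cast_count_iterate_mem]
  have hint (n : ℕ) : Integrable ((T^[n] ⁻¹' s).indicator (1 : Ω → ℝ)) μ :=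
    (integrable_const 1).indicator (hpre n)
  rw [integral_finsetSum _ fun n _ => hint n]
  simp [integral_indicator_one (hpre _), (hT.iterate _).measureReal_preimage hs.nullMeasurableSet]

lemma exists_seq_sum_visits_sub_sq_le {ι : Type*} [Countable ι] [IsProbabilityMeasure μ]
    (hT : MeasurePreserving T μ μ) {P : Ω → Prop} (hP : ∀ᵐ x ∂μ, P x) {s : ι → Set Ω}
    (hs : ∀ e, MeasurableSet (s e)) (L : ℕ → ℕ) :
    ∃ ω : ℕ → Ω, (∀ k, P (ω k)) ∧ ∀ e, ∃ C : ℝ, ∀ k,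
      (∑ i ∈ Finset.range k,
        ((Nat.count (fun n => T^[n] (ω i) ∈ s e) (L i) : ℝ) - L i * μ.real (s e))) ^ 2 ≤
      C * ∑ i ∈ Finset.range k, (L i : ℝ) ^ 2 := by
  have hcount (k : ℕ) (e : ι) :
      Measurable fun x => (Nat.count (fun n => T^[n] x ∈ s e) (L k) : ℝ) :=
    measurable_count_iterate_mem hT.measurable (hs e) (L k)
  have hcount_le (k : ℕ) (e : ι) (x : Ω) :
      (Nat.count (fun n => T^[n] x ∈ s e) (L k) : ℝ) ≤ L k := mod_cast Nat.count_le _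
  refine exists_seq_sum_sq_le
    (X := fun k e x => (Nat.count (fun n => T^[n] x ∈ s e) (L k) : ℝ) - L k * μ.real (s e))
    hP (fun k e => ((hcount k e).sub_const _).aemeasurable) (fun k e => .of_forall fun x => ?_)
    (fun k e => ?_)
  · exact abs_sub_le_of_nonneg_of_le (Nat.cast_nonneg _) (hcount_le k e x) (by positivity)
      (mul_le_of_le_one_right (Nat.cast_nonneg _) measureReal_le_one)
  · rw [integral_sub (.of_bound (hcount k e).aestronglyMeasurable (L k)
        (.of_forall fun x => by simpa using hcount_le k e x)) (integrable_const _),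
      integral_count_iterate_mem hT (hs e)]
    simp

end Visits

section Averages

lemma tendsto_div_of_monotone_of_tendsto_mul_self {u : ℕ → ℝ} {p : ℝ} (hu : Monotone u)
    (h : Tendsto (fun k : ℕ => u (k * k) / (k * k)) atTop (𝓝 p)) :
    Tendsto (fun N : ℕ => u N / N) atTop (𝓝 p) := by
  refine tendsto_div_of_monotone_of_exists_subseq_tendsto_div u p hu fun a ha =>
    ⟨fun k => k * k, ?_, tendsto_id.atTop_mul_atTop₀ tendsto_id, by simpa using h⟩
  have hlim : Tendsto (fun k : ℕ => (1 + 1 / (k : ℝ)) ^ 2) atTop (𝓝 1) := by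
    simpa using (tendsto_one_div_atTop_nhds_zero_nat (𝕜 := ℝ)).const_add 1 |>.pow 2
  filter_upwards [hlim.eventually_le_const ha, eventually_gt_atTop 0] with k hk hk0
  have : (0 : ℝ) < k := mod_cast hk0
  calc (((k + 1) * (k + 1) : ℕ) : ℝ) = (1 + 1 / (k : ℝ)) ^ 2 * (k * k) := by
        push_cast; field_simp
    _ ≤ a * ((k * k : ℕ) : ℝ) := by push_cast; gcongr

lemma tendsto_div_mul_self_of_abs_sub_le {u : ℕ → ℝ} {p m C : ℝ}
    (h : ∀ k : ℕ, |u k - k * k * p| ≤ m * k + √(C * k ^ 3)) :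
    Tendsto (fun k : ℕ => u k / (k * k)) atTop (𝓝 p) := by
  have hlim : Tendsto (fun k : ℕ => m / k + √(C / k)) atTop (𝓝 0) := by
    simpa using (tendsto_const_div_atTop_nhds_zero_nat m).add
      (tendsto_const_div_atTop_nhds_zero_nat C).sqrt
  rw [tendsto_iff_norm_sub_tendsto_zero]
  refine squeeze_zero' (.of_forall fun _ => norm_nonneg _) ?_ hlim
  filter_upwards [eventually_gt_atTop 0] with k hk
  have : (0 : ℝ) < k := mod_cast hk
  have hsqrt : √(C * (k : ℝ) ^ 3) = √(C / k) * (k * k) := by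
    rw [← Real.sqrt_sq (by positivity : (0 : ℝ) ≤ k * k), ← Real.sqrt_mul' _ (by positivity)]
    congr 1
    field_simp
  calc ‖u k / (k * k) - p‖ = |u k - k * k * p| / (k * k) := by
        rw [Real.norm_eq_abs, ← abs_of_pos (by positivity : (0 : ℝ) < k * k), ← abs_div,
          abs_of_pos (by positivity : (0 : ℝ) < k * k)]
        congr 1
        field_simp
    _ ≤ (m * k + √(C * k ^ 3)) / (k * k) := by gcongr; exact h k
    _ = m / k + √(C / k) := by rw [hsqrt]; field_simp

lemma count_mul_self (q : ℕ → Prop) (k : ℕ) :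
    Nat.count q (k * k) =
      ∑ i ∈ Finset.range k, Nat.count (fun j => q (i * i + j)) (2 * i + 1) := by
  induction k with
  | zero => simp
  | succ k ih =>
    rw [Finset.sum_range_succ, ← ih, ← Nat.count_add]
    congr 1
    ring

lemma count_le_count_add {q r : ℕ → Prop} {m L : ℕ} (h : ∀ j, j + m ≤ L → q j → r j) :
    Nat.count q L ≤ Nat.count r L + m :=
  calc Nat.count q L ≤ Nat.count q (L - m + m) := Nat.count_monotone q le_tsub_add
    _ ≤ Nat.count q (L - m) + m := by
      rw [Nat.count_add]
      exact Nat.add_le_add_left (Nat.count_le _) _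
    _ ≤ Nat.count r (L - m) + m :=
      Nat.add_le_add_right (Nat.count_mono_left fun j hj => h j (by omega)) m
    _ ≤ Nat.count r L + m := Nat.add_le_add_right (Nat.count_monotone r (Nat.sub_le L m)) _

lemma abs_count_sub_count_le {q r : ℕ → Prop} {m L : ℕ} (h : ∀ j, j + m ≤ L → (q j ↔ r j)) :
    |(Nat.count q L : ℝ) - Nat.count r L| ≤ m := by
  have hqr : (Nat.count q L : ℝ) ≤ Nat.count r L + m :=
    mod_cast count_le_count_add fun j hj => (h j hj).1
  have hrq : (Nat.count r L : ℝ) ≤ Nat.count q L + m :=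
    mod_cast count_le_count_add fun j hj => (h j hj).2
  exact abs_sub_le_iff.2 ⟨by linarith, by linarith⟩

lemma sum_two_mul_add_one (k : ℕ) : ∑ i ∈ Finset.range k, (2 * i + 1) = k * k := by
  induction k with
  | zero => rfl
  | succ k ih => rw [Finset.sum_range_succ, ih]; ring

lemma sum_two_mul_add_one_sq_le (k : ℕ) :
    ∑ i ∈ Finset.range k, ((2 * i + 1 : ℕ) : ℝ) ^ 2 ≤ 4 * k ^ 3 := by
  have hterm (i : ℕ) (hi : i ∈ Finset.range k) : ((2 * i + 1 : ℕ) : ℝ) ^ 2 ≤ (2 * k) ^ 2 := by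
    have : 2 * i + 1 ≤ 2 * k := by have := Finset.mem_range.1 hi; omega
    gcongr
    exact_mod_cast this
  calc _ ≤ ∑ _i ∈ Finset.range k, (2 * (k : ℝ)) ^ 2 := Finset.sum_le_sum hterm
    _ = 4 * k ^ 3 := by rw [Finset.sum_const, Finset.card_range, nsmul_eq_mul]; ring

end Averages

section GenericSequences

variable {A : Type*}

/-- The cylinder of all sequences that begin with the word `d`. The word `d` occurs in `a` at
position `n` exactly when the `n`-th shift of `a` lies in `wordCylinder d`. -/
def wordCylinder {m : ℕ} (d : Fin m → A) : Set (ℕ → A) := {a | ∀ i : Fin m, a i = d i}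

/-- The left shift on one-sided sequences. -/
def shift (a : ℕ → A) : ℕ → A := fun n => a (n + 1)

/-- A sequence is generic for a measure `ν` on the space of sequences if every word occurs in it
with asymptotic frequency the `ν`-measure of its cylinder. -/
def IsGenericSeq [MeasurableSpace A] (ν : Measure (ℕ → A)) (a : ℕ → A) : Prop :=
  ∀ (m : ℕ) (d : Fin m → A),
    Tendsto (fun N : ℕ => (Nat.count (fun n => shift^[n] a ∈ wordCylinder d) N : ℝ) / N) atTop
      (𝓝 (ν.real (wordCylinder d)))

/-- The sequence whose terms at the positions `k², …, k² + 2k` are the first `2k + 1` terms of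
`b k`, so that it consists of longer and longer prefixes of `b 0`, `b 1`, …. -/
def concatPrefixes (b : ℕ → ℕ → A) (n : ℕ) : A := b n.sqrt (n - n.sqrt * n.sqrt)

lemma concatPrefixes_mul_self_add (b : ℕ → ℕ → A) {k j : ℕ} (hj : j ≤ 2 * k) :
    concatPrefixes b (k * k + j) = b k j := by
  rw [concatPrefixes, Nat.sqrt_add_eq k (by omega), Nat.add_sub_cancel_left]

lemma iterate_shift_apply (a : ℕ → A) (n k : ℕ) : shift^[n] a k = a (n + k) := by
  induction n generalizing k with
  | zero => simp
  | succ n ih =>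
    rw [Function.iterate_succ_apply', shift, ih]
    congr 1
    ring

lemma iterate_shift_mem_wordCylinder {a : ℕ → A} {n m : ℕ} {d : Fin m → A} :
    shift^[n] a ∈ wordCylinder d ↔ ∀ i : Fin m, a (n + i) = d i := by
  simp only [wordCylinder, Set.mem_ofPred_eq, iterate_shift_apply]

/-- Only the last `m` positions can differ: there the word overlaps the next block. -/
lemma abs_count_concatPrefixes_sub_count_le (b : ℕ → ℕ → A) {m : ℕ} (d : Fin m → A) (i : ℕ) :
    |(Nat.count (fun j => shift^[i * i + j] (concatPrefixes b) ∈ wordCylinder d) (2 * i + 1) : ℝ)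
      - Nat.count (fun j => shift^[j] (b i) ∈ wordCylinder d) (2 * i + 1)| ≤ m := by
  refine abs_count_sub_count_le fun j hj => ?_
  simp only [iterate_shift_mem_wordCylinder]
  refine forall_congr' fun l => ?_
  rw [add_assoc, concatPrefixes_mul_self_add b (by have := l.isLt; omega)]

lemma abs_count_concatPrefixes_sub_le {b : ℕ → ℕ → A} {m : ℕ} {d : Fin m → A} {p C : ℝ}
    (k : ℕ) (hC : (∑ i ∈ Finset.range k,
      ((Nat.count (fun j => shift^[j] (b i) ∈ wordCylinder d) (2 * i + 1) : ℝ)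
        - (2 * i + 1 : ℕ) * p)) ^ 2 ≤ C) :
    |(Nat.count (fun n => shift^[n] (concatPrefixes b) ∈ wordCylinder d) (k * k) : ℝ)
      - k * k * p| ≤ m * k + √C := by
  set u : ℕ → ℝ := fun i =>
    Nat.count (fun j => shift^[i * i + j] (concatPrefixes b) ∈ wordCylinder d) (2 * i + 1)
  set v : ℕ → ℝ := fun i => Nat.count (fun j => shift^[j] (b i) ∈ wordCylinder d) (2 * i + 1)
  have hsplit : (Nat.count (fun n => shift^[n] (concatPrefixes b) ∈ wordCylinder d) (k * k) : ℝ)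
      - k * k * p = ∑ i ∈ Finset.range k, (u i - v i)
        + ∑ i ∈ Finset.range k, (v i - (2 * i + 1 : ℕ) * p) := by
    have hlen : ((k * k : ℕ) : ℝ) * p = ∑ i ∈ Finset.range k, ((2 * i + 1 : ℕ) : ℝ) * p := by
      rw [← sum_two_mul_add_one, Nat.cast_sum, Finset.sum_mul]
    rw [count_mul_self, Nat.cast_sum, ← Nat.cast_mul, hlen, ← Finset.sum_sub_distrib,
      ← Finset.sum_add_distrib]
    exact Finset.sum_congr rfl fun i _ => (sub_add_sub_cancel _ _ _).symm
  have hdiff : |∑ i ∈ Finset.range k, (u i - v i)| ≤ m * k :=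
    calc _ ≤ ∑ i ∈ Finset.range k, |u i - v i| := Finset.abs_sum_le_sum_abs _ _
      _ ≤ ∑ _i ∈ Finset.range k, (m : ℝ) :=
        Finset.sum_le_sum fun i _ => abs_count_concatPrefixes_sub_count_le b d i
      _ = m * k := by simp [mul_comm]
  rw [hsplit]
  exact (abs_add_le _ _).trans (add_le_add hdiff (Real.abs_le_sqrt hC))

variable [MeasurableSpace A] [MeasurableSingletonClass A]

lemma measurableSet_wordCylinder {m : ℕ} (d : Fin m → A) : MeasurableSet (wordCylinder d) := by
  have heq : wordCylinder d = ⋂ i : Fin m, (fun a : ℕ → A => a i) ⁻¹' {d i} := by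
    ext a
    simp [wordCylinder]
  rw [heq]
  exact .iInter fun i => measurable_pi_apply (i : ℕ) (measurableSet_singleton (d i))

theorem exists_isGenericSeq [Countable A] {ν : Measure (ℕ → A)} [IsProbabilityMeasure ν]
    (hν : MeasurePreserving shift ν ν) {S : Set A} (hS : ∀ᵐ b ∂ν, ∀ n, b n ∈ S) :
    ∃ a : ℕ → A, (∀ n, a n ∈ S) ∧ IsGenericSeq ν a := by
  obtain ⟨b, hbS, hb⟩ := exists_seq_sum_visits_sub_sq_le hν hS
    (s := fun w : Σ m : ℕ, Fin m → A => wordCylinder w.2)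
    (fun w => measurableSet_wordCylinder w.2) (fun k => 2 * k + 1)
  refine ⟨concatPrefixes b, fun n => hbS _ _, fun m d => ?_⟩
  obtain ⟨C, hC⟩ := hb ⟨m, d⟩
  have hC0 : 0 ≤ C := by simpa using (sq_nonneg _).trans (hC 1)
  refine tendsto_div_of_monotone_of_tendsto_mul_self
    (Nat.mono_cast.comp (Nat.count_monotone _)) (tendsto_div_mul_self_of_abs_sub_le
      (m := m) (C := C * 4) fun k => abs_count_concatPrefixes_sub_le k ?_)
  calc _ ≤ C * ∑ i ∈ Finset.range k, ((2 * i + 1 : ℕ) : ℝ) ^ 2 := hC k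
    _ ≤ C * (4 * k ^ 3) := by gcongr; exact sum_two_mul_add_one_sq_le k
    _ = C * 4 * k ^ 3 := (mul_assoc _ _ _).symm

end GenericSequences

section ContinuedFractions

lemma cfa_eq_floor_iterate (n : ℕ) (x : ℝ) : cfa n x = ⌊(gaussMap^[n] x)⁻¹⌋₊ := by
  induction n generalizing x with
  | zero => rfl
  | succ _ ih => exact ih (gaussMap x)

lemma gaussMap_ratCast (q : ℚ) : gaussMap q = (Int.fract q⁻¹ : ℚ) := by
  rw [gaussMap, ← Rat.cast_inv, Rat.cast_fract]

lemma irrational_of_forall_iterate_gaussMap_pos {x : ℝ} (hx : ∀ n, 0 < gaussMap^[n] x) :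
    Irrational x := by
  rintro ⟨q, rfl⟩
  induction hN : q.num.toNat using Nat.strong_induction_on generalizing q with
  | _ N ih =>
    have hq : 0 < q := Rat.cast_pos.1 (hx 0)
    have hlt : (Int.fract q⁻¹).num < q.num := Rat.fract_inv_num_lt_num_of_pos hq
    refine ih _ ?_ (Int.fract q⁻¹) (fun n => ?_) rfl
    · rw [← hN, Int.toNat_lt_toNat (Rat.num_pos.2 hq)]
      exact hlt
    · rw [← gaussMap_ratCast, ← Function.iterate_succ_apply]
      exact hx (n + 1)

lemma irrational_gaussMap {x : ℝ} (hx : Irrational x) : Irrational (gaussMap x) :=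
  (irrational_inv_iff.2 hx).sub_intCast _

lemma iterate_gaussMap_mem_Ioo {x : ℝ} (hx : x ∈ Set.Ioo (0 : ℝ) 1) (hirr : Irrational x) (n : ℕ) :
    gaussMap^[n] x ∈ Set.Ioo (0 : ℝ) 1 := by
  induction n generalizing x with
  | zero => exact hx
  | succ _ ih =>
    have hirr' := irrational_gaussMap hirr
    exact ih ⟨(Int.fract_nonneg _).lt_of_ne' hirr'.ne_zero, Int.fract_lt_one _⟩ hirr'

lemma cfa_pos {x : ℝ} (hx : x ∈ Set.Ioo (0 : ℝ) 1) (hirr : Irrational x) (n : ℕ) : 0 < cfa n x := by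
  obtain ⟨hpos, hlt⟩ := iterate_gaussMap_mem_Ioo hx hirr n
  rw [cfa_eq_floor_iterate, Nat.floor_pos]
  exact (one_le_inv₀ hpos).2 hlt.le

/-- The sequence `t` consists of the complete quotients `t n = [0; a n, a (n + 1), …]` for the
partial quotients `a 0, a 1, …`. The relation `t n = 1 / (a n + t (n + 1))` is written without
division, which makes it a closed condition on `t`. -/
structure IsTailSeq (a : ℕ → ℕ) (t : ℕ → ℝ) : Prop where
  mem_Icc (n : ℕ) : t n ∈ Set.Icc (0 : ℝ) 1
  mul_eq_one (n : ℕ) : t n * (a n + t (n + 1)) = 1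

lemma exists_truncated_tailSeq {a : ℕ → ℕ} (ha : ∀ n, 0 < a n) (N : ℕ) :
    ∃ t : ℕ → ℝ, (∀ n, t n ∈ Set.Icc (0 : ℝ) 1) ∧ ∀ n < N, t n * (a n + t (n + 1)) = 1 := by
  induction N generalizing a with
  | zero => exact ⟨0, by simp, by simp⟩
  | succ N ih =>
    obtain ⟨t, ht, htN⟩ := ih fun n => ha (n + 1)
    have hge : 1 ≤ a 0 + t 0 := by
      have : (1 : ℝ) ≤ a 0 := mod_cast ha 0
      linarith [(ht 0).1]
    refine ⟨fun n => n.casesOn (a 0 + t 0)⁻¹ t, fun n => ?_, fun n hn => ?_⟩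
    · cases n with
      | zero => exact ⟨inv_nonneg.2 (by linarith), inv_le_one_of_one_le₀ hge⟩
      | succ n => exact ht n
    · cases n with
      | zero => exact inv_mul_cancel₀ (by linarith : (0 : ℝ) < a 0 + t 0).ne'
      | succ n => exact htN n (by omega)

/-- Compactness of `[0, 1]^ℕ` turns the finite continued fractions into an infinite one. -/
lemma exists_isTailSeq {a : ℕ → ℕ} (ha : ∀ n, 0 < a n) : ∃ t, IsTailSeq a t := by
  let K (N : ℕ) : Set (ℕ → ℝ) :=
    Set.univ.pi (fun _ => Set.Icc 0 1) ∩ ⋂ n < N, {t | t n * (a n + t (n + 1)) = 1}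
  have hclosed (N : ℕ) : IsClosed (⋂ n < N, {t : ℕ → ℝ | t n * (a n + t (n + 1)) = 1}) :=
    isClosed_biInter fun n _ => isClosed_eq (by fun_prop) continuous_const
  have hcompact (N : ℕ) : IsCompact (K N) :=
    (isCompact_univ_pi fun _ => isCompact_Icc).inter_right (hclosed N)
  obtain ⟨t, ht⟩ := IsCompact.nonempty_iInter_of_sequence_nonempty_isCompact_isClosed K
    (fun N => Set.inter_subset_inter_right _
      (Set.biInter_mono (fun n hn => Nat.lt_succ_of_lt hn) fun _ _ => subset_rfl))
    (fun N =>
      let ⟨t, ht, htN⟩ := exists_truncated_tailSeq ha N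
      ⟨t, fun n _ => ht n, Set.mem_iInter₂.2 htN⟩)
    (hcompact 0) (fun N => (hcompact N).isClosed)
  rw [Set.mem_iInter] at ht
  exact ⟨t, fun n => (ht 0).1 n trivial,
    fun n => Set.mem_iInter₂.1 (ht (n + 1)).2 n (Nat.lt_succ_self n)⟩

namespace IsTailSeq

variable {a : ℕ → ℕ} {t : ℕ → ℝ}

lemma pos (h : IsTailSeq a t) (n : ℕ) : 0 < t n :=
  (h.mem_Icc n).1.lt_of_ne' (left_ne_zero_of_mul_eq_one (h.mul_eq_one n))

lemma inv_eq (h : IsTailSeq a t) (n : ℕ) : (t n)⁻¹ = a n + t (n + 1) :=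
  inv_eq_of_mul_eq_one_right (h.mul_eq_one n)

lemma lt_one (h : IsTailSeq a t) (ha : ∀ n, 0 < a n) (n : ℕ) : t n < 1 := by
  have hinv : 1 < (t n)⁻¹ := by
    have : (1 : ℝ) ≤ a n := mod_cast ha n
    rw [h.inv_eq]
    linarith [h.pos (n + 1)]
  exact (one_lt_inv₀ (h.pos n)).1 hinv

lemma iterate_gaussMap (h : IsTailSeq a t) (ha : ∀ n, 0 < a n) (n : ℕ) :
    gaussMap^[n] (t 0) = t n := by
  induction n with
  | zero => rfl
  | succ n ih =>
    rw [Function.iterate_succ_apply', ih, gaussMap, h.inv_eq, Int.fract_natCast_add,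
      Int.fract_eq_self]
    exact ⟨(h.pos _).le, h.lt_one ha _⟩

lemma cfa_eq (h : IsTailSeq a t) (ha : ∀ n, 0 < a n) (n : ℕ) : cfa n (t 0) = a n := by
  rw [cfa_eq_floor_iterate, h.iterate_gaussMap ha, h.inv_eq, add_comm,
    Nat.floor_add_natCast (h.pos _).le, Nat.floor_eq_zero.2 (h.lt_one ha _), zero_add]

end IsTailSeq

theorem exists_irrational_cfa_eq {a : ℕ → ℕ} (ha : ∀ n, 0 < a n) :
    ∃ x ∈ Set.Ioo (0 : ℝ) 1, Irrational x ∧ ∀ n, cfa n x = a n := by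
  obtain ⟨t, ht⟩ := exists_isTailSeq ha
  refine ⟨t 0, ⟨ht.pos 0, ht.lt_one ha 0⟩,
    irrational_of_forall_iterate_gaussMap_pos fun n => ?_, ht.cfa_eq ha⟩
  rw [ht.iterate_gaussMap ha]
  exact ht.pos n

end ContinuedFractions

section GaussMeasure

lemma gaussMeasure_Ioc {a b : ℝ} (ha : 0 ≤ a) (hab : a ≤ b) (hb : b ≤ 1) :
    gaussMeasure (Set.Ioc a b) =
      ENNReal.ofReal ((Real.log 2)⁻¹ * (Real.log (1 + b) - Real.log (1 + a))) := by
  have hpos {x : ℝ} (hx : x ∈ Set.Icc a b) : 0 < 1 + x := by linarith [hx.1]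
  have hcont : ContinuousOn (fun x : ℝ => (1 + x)⁻¹) (Set.Icc a b) :=
    ContinuousOn.inv₀ (by fun_prop) fun x hx => (hpos hx).ne'
  have hcont' : ContinuousOn (fun x : ℝ => (Real.log 2)⁻¹ * (1 + x)⁻¹) (Set.Icc a b) :=
    continuousOn_const.mul hcont
  have hintegral : ∫ x in a..b, (1 + x)⁻¹ = Real.log (1 + b) - Real.log (1 + a) := by
    refine intervalIntegral.integral_eq_sub_of_hasDerivAt (f := fun x => Real.log (1 + x))
      (fun x hx => ?_) (hcont.intervalIntegrable_of_Icc hab)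
    rw [Set.uIcc_of_le hab] at hx
    simpa using ((hasDerivAt_id x).const_add 1).log (hpos hx).ne'
  rw [gaussMeasure, withDensity_apply _ measurableSet_Ioc,
    Measure.restrict_congr_set Ioo_ae_eq_Ioc, Measure.restrict_restrict measurableSet_Ioc,
    Set.inter_eq_left.2 (Set.Ioc_subset_Ioc ha hb),
    ← ofReal_integral_eq_lintegral_ofReal
      (hcont'.integrableOn_Icc.mono_set Set.Ioc_subset_Icc_self),
    ← intervalIntegral.integral_of_le hab, intervalIntegral.integral_const_mul, hintegral]
  filter_upwards [ae_restrict_mem measurableSet_Ioc] with x hx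
  have := hpos (Set.Ioc_subset_Icc_self hx)
  have := Real.log_pos one_lt_two
  positivity

lemma ae_gaussMeasure_mem_Ioo : ∀ᵐ x ∂gaussMeasure, x ∈ Set.Ioo (0 : ℝ) 1 :=
  (withDensity_absolutelyContinuous _ _).ae_le (ae_restrict_mem measurableSet_Ioo)

lemma gaussMeasure_absolutelyContinuous : gaussMeasure ≪ volume :=
  (withDensity_absolutelyContinuous _ _).trans Measure.restrict_le_self.absolutelyContinuous

lemma ae_gaussMeasure_irrational : ∀ᵐ x ∂gaussMeasure, Irrational x :=
  gaussMeasure_absolutelyContinuous.ae_le ((Set.countable_range _).ae_notMem volume)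

lemma gaussMeasure_real_Ioc {a b : ℝ} (ha : 0 ≤ a) (hab : a ≤ b) (hb : b ≤ 1) :
    gaussMeasure.real (Set.Ioc a b) =
      (Real.log 2)⁻¹ * (Real.log (1 + b) - Real.log (1 + a)) := by
  have hlog : Real.log (1 + a) ≤ Real.log (1 + b) := Real.log_le_log (by linarith) (by linarith)
  have := Real.log_pos one_lt_two
  rw [measureReal_def, gaussMeasure_Ioc ha hab hb, ENNReal.toReal_ofReal]
  exact mul_nonneg (by positivity) (sub_nonneg.2 hlog)

instance gaussMeasure.instIsProbabilityMeasure : IsProbabilityMeasure gaussMeasure where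
  measure_univ := by
    have huniv : (Set.Ioc 0 1 : Set ℝ) =ᵐ[gaussMeasure] Set.univ :=
      eventuallyEq_univ.2 (ae_gaussMeasure_mem_Ioo.mono fun x hx => ⟨hx.1, hx.2.le⟩)
    rw [← measure_congr huniv, gaussMeasure_Ioc le_rfl zero_le_one le_rfl]
    norm_num [(Real.log_pos one_lt_two).ne']

lemma measurable_gaussMap : Measurable gaussMap := measurable_inv.fract

lemma measurable_cfa (n : ℕ) : Measurable (cfa n) := by
  induction n with
  | zero => exact Nat.measurable_floor.comp measurable_inv
  | succ n ih => exact ih.comp measurable_gaussMap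

lemma le_fract_iff_exists_nat {t y : ℝ} (ht : 0 ≤ t) (hy : 1 ≤ y) :
    t ≤ Int.fract y ↔ ∃ k : ℕ, k + 1 + t ≤ y ∧ y < k + 2 := by
  constructor
  · intro h
    have hfloor : 1 ≤ ⌊y⌋ := Int.le_floor.2 (mod_cast hy)
    obtain ⟨k, hk⟩ := Int.eq_ofNat_of_zero_le (sub_nonneg.2 hfloor)
    have hk' : (⌊y⌋ : ℝ) = k + 1 := by
      rw [← sub_eq_iff_eq_add]
      exact_mod_cast hk
    have := Int.floor_add_fract y
    have := Int.fract_lt_one y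
    exact ⟨k, by linarith, by linarith⟩
  · rintro ⟨k, hk, hk'⟩
    have hfloor : ⌊y⌋ = k + 1 := Int.floor_eq_iff.2 (by push_cast; constructor <;> linarith)
    rw [Int.fract, hfloor]
    push_cast
    linarith

lemma le_gaussMap_iff {t x : ℝ} (ht : 0 ≤ t) (hx : x ∈ Set.Ioo (0 : ℝ) 1) :
    t ≤ gaussMap x ↔ ∃ k : ℕ, x ∈ Set.Ioc (k + 2 : ℝ)⁻¹ (k + 1 + t)⁻¹ := by
  rw [gaussMap, le_fract_iff_exists_nat ht ((one_le_inv₀ hx.1).2 hx.2.le)]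
  refine exists_congr fun k => ?_
  rw [Set.mem_Ioc, inv_lt_comm₀ (by positivity) hx.1, le_inv_comm₀ hx.1 (by positivity), and_comm]

/-- The masses telescope: that of the `k`-th interval is `(F k - F (k + 1)) / log 2`, where
`F k = log ((k + 2) / (k + 1 + t))`. -/
lemma hasSum_gaussMeasure_real_Ioc_inv {t : ℝ} (ht : t ∈ Set.Icc (0 : ℝ) 1) :
    HasSum (fun k : ℕ => gaussMeasure.real (Set.Ioc (k + 2 : ℝ)⁻¹ (k + 1 + t)⁻¹))
      (gaussMeasure.real (Set.Ioc t 1)) := by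
  obtain ⟨ht0, ht1⟩ := ht
  let F (k : ℕ) : ℝ := Real.log (k + 2) - Real.log (k + 1 + t)
  have hmass (k : ℕ) : gaussMeasure.real (Set.Ioc (k + 2 : ℝ)⁻¹ (k + 1 + t)⁻¹) =
      (Real.log 2)⁻¹ * (F k - F (k + 1)) := by
    have : (0 : ℝ) ≤ k := k.cast_nonneg
    have hlog {y : ℝ} (hy : 0 < y) : Real.log (1 + y⁻¹) = Real.log (y + 1) - Real.log y := by
      rw [← Real.log_div (by positivity) hy.ne', add_div, div_self hy.ne', one_div]
    rw [gaussMeasure_real_Ioc (by positivity) (inv_anti₀ (by positivity) (by linarith))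
      (inv_le_one_of_one_le₀ (by linarith)), hlog (by positivity), hlog (by positivity)]
    simp only [F]
    push_cast
    ring_nf
  have hF : Tendsto F atTop (𝓝 0) := by
    have hlim (y : ℝ) : Tendsto (fun k : ℕ => Real.log (k + y) - Real.log k) atTop (𝓝 0) :=
      (Real.tendsto_log_comp_add_sub_log y).comp tendsto_natCast_atTop_atTop
    simpa [F, add_assoc] using (hlim 2).sub (hlim (1 + t))
  have htotal : gaussMeasure.real (Set.Ioc t 1) = (Real.log 2)⁻¹ * (F 0 - 0) := by
    rw [gaussMeasure_real_Ioc ht0 ht1 le_rfl]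
    norm_num [F]
  rw [hasSum_iff_tendsto_nat_of_nonneg fun _ => measureReal_nonneg, htotal]
  simp only [hmass, ← Finset.mul_sum, Finset.sum_range_sub']
  exact (hF.const_sub _).const_mul _

lemma gaussMeasure_preimage_gaussMap_Ici {t : ℝ} (ht : t ∈ Set.Icc (0 : ℝ) 1) :
    gaussMeasure (gaussMap ⁻¹' Set.Ici t) = gaussMeasure (Set.Ioc t 1) := by
  have hpre : (gaussMap ⁻¹' Set.Ici t : Set ℝ) =ᵐ[gaussMeasure]
      ⋃ k : ℕ, Set.Ioc (k + 2 : ℝ)⁻¹ (k + 1 + t)⁻¹ := by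
    filter_upwards [ae_gaussMeasure_mem_Ioo] with x hx
    exact propext ((le_gaussMap_iff ht.1 hx).trans Set.mem_iUnion.symm)
  have hdisj : Pairwise (Function.onFun Disjoint
      fun k : ℕ => Set.Ioc (k + 2 : ℝ)⁻¹ (k + 1 + t)⁻¹) := by
    have hanti : Antitone fun k : ℕ => (k + 1 : ℝ)⁻¹ := fun j k hjk => by dsimp only; gcongr
    refine hanti.pairwise_disjoint_on_Ioc_succ.mono fun j k h => h.mono ?_ ?_ <;>
    · refine Set.Ioc_subset_Ioc (le_of_eq ?_) (inv_anti₀ (by positivity) (by linarith [ht.1]))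
      push_cast [Order.succ_eq_add_one]
      ring
  rw [measure_congr hpre, ← measureReal_eq_measureReal_iff, measureReal_def,
    measure_iUnion hdisj fun _ => measurableSet_Ioc,
    ENNReal.tsum_toReal_eq fun _ => measure_ne_top _ _]
  exact (hasSum_gaussMeasure_real_Ioc_inv ht).tsum_eq

theorem measurePreserving_gaussMap : MeasurePreserving gaussMap gaussMeasure gaussMeasure := by
  refine ⟨measurable_gaussMap, Measure.ext_of_Ici _ _ fun t => ?_⟩
  rw [Measure.map_apply measurable_gaussMap measurableSet_Ici]
  rcases lt_or_ge t 0 with ht0 | ht0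
  · refine measure_congr ?_
    filter_upwards [ae_gaussMeasure_mem_Ioo] with x hx
    exact propext (iff_of_true (ht0.le.trans (Int.fract_nonneg _)) (ht0.trans hx.1).le)
  rcases lt_or_ge 1 t with ht1 | ht1
  · refine measure_congr ?_
    filter_upwards [ae_gaussMeasure_mem_Ioo] with x hx
    exact propext (iff_of_false ((Int.fract_lt_one _).trans ht1).not_ge (hx.2.trans ht1).not_ge)
  rw [gaussMeasure_preimage_gaussMap_Ici ⟨ht0, ht1⟩]
  refine measure_congr ?_
  filter_upwards [ae_gaussMeasure_mem_Ioo, gaussMeasure_absolutelyContinuous.ae_le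
    (measure_eq_zero_iff_ae_notMem.1 (measure_singleton t))] with x hx hxt
  exact propext ⟨fun h => h.1.le, fun h => ⟨h.lt_of_ne' hxt, hx.2.le⟩⟩

end GaussMeasure

section Digits

/-- The sequence of partial quotients of `x`, as a factor map from the Gauss map to the shift. -/
noncomputable def partialQuotients (x : ℝ) : ℕ → ℕ := fun n => cfa n x

lemma measurable_partialQuotients : Measurable partialQuotients :=
  measurable_pi_lambda _ measurable_cfa

lemma measurePreserving_shift_map_partialQuotients :
    MeasurePreserving shift (gaussMeasure.map partialQuotients)
      (gaussMeasure.map partialQuotients) :=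
  .of_semiconj (measurable_partialQuotients.measurePreserving _) measurePreserving_gaussMap
    (fun _ => rfl) (measurable_pi_lambda _ fun n => measurable_pi_apply (n + 1))

lemma ae_map_partialQuotients_pos : ∀ᵐ a ∂gaussMeasure.map partialQuotients, ∀ n, 0 < a n := by
  rw [ae_all_iff]
  intro n
  rw [ae_map_iff measurable_partialQuotients.aemeasurable
    (measurableSet_lt measurable_const (measurable_pi_apply n))]
  filter_upwards [ae_gaussMeasure_mem_Ioo, ae_gaussMeasure_irrational] with x hx hirr
  exact cfa_pos hx hirr n

lemma map_partialQuotients_real_wordCylinder {m : ℕ} (d : Fin m → ℕ) :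
    (gaussMeasure.map partialQuotients).real (wordCylinder d) =
      gaussMeasure.real
        {y | y ∈ Set.Ioo (0 : ℝ) 1 ∧ Irrational y ∧ ∀ i : Fin m, cfa i y = d i} := by
  rw [map_measureReal_apply measurable_partialQuotients (measurableSet_wordCylinder d)]
  refine measureReal_congr ?_
  filter_upwards [ae_gaussMeasure_mem_Ioo, ae_gaussMeasure_irrational] with x hx hirr
  exact propext ⟨fun h => ⟨hx, hirr, h⟩, fun h => h.2.2⟩

end Digits

/-- **Adler–Keane–Smorodinsky**: there exists an irrational `x ∈ (0,1)` that is normal for the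
continued fraction transformation: every finite word `d_1 … d_m` of positive integers occurs in
the sequence of partial quotients of `x` with frequency equal to the Gauss measure of the
cylinder `{y : a_1(y) = d_1, …, a_m(y) = d_m}`. -/
theorem exists_cf_normal_number :
    ∃ x : ℝ, x ∈ Set.Ioo (0 : ℝ) 1 ∧ Irrational x ∧
      ∀ m : ℕ, 0 < m → ∀ d : Fin m → ℕ, (∀ i, 0 < d i) →
        Tendsto
          (fun N : ℕ =>
            (((Finset.range N).filter fun n =>
              ∀ i : Fin m, cfa (n + (i : ℕ)) x = d i).card : ℝ) / N)
          atTop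
          (𝓝 ((gaussMeasure {y : ℝ | y ∈ Set.Ioo (0 : ℝ) 1 ∧ Irrational y ∧
            ∀ i : Fin m, cfa (i : ℕ) y = d i}).toReal)) := by
  have := Measure.isProbabilityMeasure_map (μ := gaussMeasure)
    measurable_partialQuotients.aemeasurable
  obtain ⟨a, hapos, hagen⟩ := exists_isGenericSeq (S := {n | 0 < n})
    measurePreserving_shift_map_partialQuotients ae_map_partialQuotients_pos
  obtain ⟨x, hx, hirr, hxa⟩ := exists_irrational_cfa_eq hapos
  refine ⟨x, hx, hirr, fun m _ d _ => ?_⟩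
  have hfreq := hagen m d
  rw [map_partialQuotients_real_wordCylinder, measureReal_def] at hfreq
  simpa only [hxa, Nat.count_eq_card_filter_range, iterate_shift_mem_wordCylinder] using hfreq
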